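/- For a partition μ with n ≥ 2|μ|, the symmetric function ĥ_μ defined by φ_n(ĥ_μ) = h_{(n−|μ|,μ)} satisfies ĥ_μ = ∑_{ν ⊢ |μ|} ∑_{λ} K_{νμ} s̃_λ, where the inner sum is over partitions λ such that ν/λ is a horizontal strip, and K_{νμ} is the Kostka number; equivalently the coefficient of s̃_λ in ĥ_μ is K_{(n−|λ|,λ),(n−|μ|,μ)}. -/

import Mathlib

open scoped BigOperators
noncomputable section

/-- The ring of symmetric functions, presented as `ℚ[p₁, p₂, p₃, …]`,
with the variable `X k` representing the power sum `p_k` (the variable `X 0` is unused). -/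
abbrev SymFn := MvPolynomial ℕ ℚ

/-- The power sum symmetric function `p_k`. -/
def pGen (k : ℕ) : SymFn := MvPolynomial.X k

/-- `p_λ` for a multiset of parts. -/
def pMul (m : Multiset ℕ) : SymFn := (m.map pGen).prod

/-- `p_λ` for a partition `λ`. -/
def pPart {n : ℕ} (lam : n.Partition) : SymFn := pMul lam.parts

/-- `z_λ = ∏_i i^{m_i(λ)} m_i(λ)!`. -/
def zed {n : ℕ} (lam : n.Partition) : ℚ :=
  ∏ i ∈ Finset.range (n + 1),
    (i : ℚ) ^ (lam.parts.count i) * (Nat.factorial (lam.parts.count i))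

/-- `z` of a monomial in the `p`-generators. -/
def zMon (m : ℕ →₀ ℕ) : ℚ :=
  ∏ i ∈ m.support, (i : ℚ) ^ (m i) * (Nat.factorial (m i))

/-- The Hall scalar product, determined by `⟨p_λ, p_μ⟩ = z_λ δ_{λμ}`. -/
def hall (f g : SymFn) : ℚ :=
  ∑ m ∈ f.support, MvPolynomial.coeff m f * MvPolynomial.coeff m g * zMon m

/-- The complete homogeneous symmetric function `h_m = ∑_{λ ⊢ m} p_λ / z_λ`. -/
def hFn (m : ℕ) : SymFn := ∑ lam : m.Partition, (zed lam)⁻¹ • pPart lam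

/-- `h_k` for an integer index, vanishing for negative `k`. -/
def hInt (k : ℤ) : SymFn := if 0 ≤ k then hFn k.toNat else 0

/-- The Schur function of a (finite, weakly decreasing) list of row lengths,
via the Jacobi–Trudi determinant `s_λ = det(h_{λ_i - i + j})`. -/
def schurList (l : List ℕ) : SymFn :=
  Matrix.det (Matrix.of fun i j : Fin l.length =>
    hInt ((l.get i : ℤ) - (i : ℤ) + (j : ℤ)))

/-- The parts of a partition, sorted in weakly decreasing order. -/
def partList {n : ℕ} (lam : n.Partition) : List ℕ := (lam.parts.sort (· ≤ ·)).reverse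

/-- The Schur function `s_λ`. -/
def schur {n : ℕ} (lam : n.Partition) : SymFn := schurList (partList lam)

/-- Evaluation `f(Ξ_ν)` of a symmetric function at the eigenvalues of a permutation
matrix of cycle type `ν`: the power sum `p_k` evaluates to `∑_{j ∈ ν, j ∣ k} j`. -/
def xiEval {n : ℕ} (nu : n.Partition) (f : SymFn) : ℚ :=
  MvPolynomial.eval (fun k => ((nu.parts.filter (fun j => j ∣ k)).sum : ℚ)) f

/-- The character scalar product `⟨f, g⟩_@ = ∑_{ν ⊢ n} f(Ξ_ν) g(Ξ_ν) / z_ν`. -/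
def atProd (n : ℕ) (f g : SymFn) : ℚ :=
  ∑ nu : n.Partition, xiEval nu f * xiEval nu g / zed nu

/-- The Frobenius-type map `φ_n(f) = ∑_{ν ⊢ n} f(Ξ_ν) p_ν / z_ν`. -/
def phi (n : ℕ) (f : SymFn) : SymFn :=
  ∑ nu : n.Partition, (xiEval nu f / zed nu) • pPart nu

/-- The Kronecker (internal) product, determined by
`(p_λ/z_λ) ∗ (p_μ/z_μ) = δ_{λμ} p_λ/z_λ`. -/
def kron (f g : SymFn) : SymFn :=
  ∑ m ∈ f.support,
    MvPolynomial.monomial m (MvPolynomial.coeff m f * MvPolynomial.coeff m g * zMon m)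

end


open scoped BigOperators
noncomputable section

/-- A (possibly skew) tableau, in French notation: `rows 0` is the bottom row.
`inn i` is the number of cells of the inner shape in row `i`, and `rows i`
lists the entries of row `i` from left to right. -/
structure SkewTab where
  inn : List ℕ
  rows : List (List ℕ)

namespace SkewTab

/-- Inner shape of row `i`. -/
def innFn (T : SkewTab) (i : ℕ) : ℕ := T.inn.getD i 0

/-- Outer shape of row `i`. -/
def outFn (T : SkewTab) (i : ℕ) : ℕ := T.innFn i + (T.rows.getD i []).length

/-- The entry in row `i`, column `j` (for cells of the skew shape). -/
def entry (T : SkewTab) (i j : ℕ) : ℕ := (T.rows.getD i []).getD (j - T.innFn i) 0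

/-- Column strict (skew) tableau: rows weakly increase left to right, columns
strictly increase bottom to top, entries are positive integers. -/
def IsSkewCST (T : SkewTab) : Prop :=
  T.inn.length = T.rows.length ∧
  (∀ i, T.innFn (i + 1) ≤ T.innFn i) ∧
  (∀ i, T.outFn (i + 1) ≤ T.outFn i) ∧
  (T.rows ≠ [] → T.outFn (T.rows.length - 1) ≠ 0) ∧
  (∀ r ∈ T.rows, r.Chain' (· ≤ ·)) ∧
  (∀ r ∈ T.rows, ∀ x ∈ r, 0 < x) ∧
  (∀ i j, T.innFn (i + 1) ≤ j → j < T.outFn (i + 1) → T.innFn i ≤ j →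
    T.entry i j < T.entry (i + 1) j)

/-- A column strict tableau of straight shape. -/
def IsCST (T : SkewTab) : Prop :=
  T.IsSkewCST ∧ T.inn = List.replicate T.rows.length 0

/-- The (outer) shape of a straight-shape tableau, as the list of row lengths. -/
def shape (T : SkewTab) : List ℕ := T.rows.map List.length

/-- The reading word: rows are read bottom to top, each row right to left. -/
def read (T : SkewTab) : List ℕ := (T.rows.map List.reverse).flatten

/-- The number of occurrences of the letter `x` among the entries of `T`. -/
def contentCount (T : SkewTab) (x : ℕ) : ℕ := T.rows.flatten.count x

end SkewTab

/-- A word `w` (in the alphabet of positive integers) is lattice if every prefix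
contains at least as many `i`'s as `(i+1)`'s, for every `i ≥ 1`. -/
def IsLatticeWord (w : List ℕ) : Prop :=
  ∀ p i, 1 ≤ i → (w.take p).count (i + 1) ≤ (w.take p).count i

/-- A word has content `ν` (i.e. `{{1^{ν_1}, 2^{ν_2}, …}}`) if the letter `i+1`
occurs exactly `ν_{i+1}` times, where `ν` is given as a weakly decreasing list. -/
def HasContent (w : List ℕ) (l : List ℕ) : Prop :=
  ∀ i, w.count (i + 1) = l.getD i 0

/-- One elementary Knuth transformation. -/
inductive KnuthStep : List ℕ → List ℕ → Prop
  | k1 (u v : List ℕ) {x y z : ℕ} (h1 : x ≤ y) (h2 : y < z) :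
      KnuthStep (u ++ x :: z :: y :: v) (u ++ z :: x :: y :: v)
  | k2 (u v : List ℕ) {x y z : ℕ} (h1 : x < y) (h2 : y ≤ z) :
      KnuthStep (u ++ y :: x :: z :: v) (u ++ y :: z :: x :: v)

/-- Knuth (plactic) equivalence of words; two skew tableaux are jeu de taquin
equivalent exactly when their reading words are Knuth equivalent. -/
def KnuthEquiv : List ℕ → List ℕ → Prop := Relation.EqvGen KnuthStep

end

/-!
The coefficient of `p_ν` in `φ_n f` is the value of `f` at the eigenvalues of a permutation of
cycle type `ν`, divided by `z_ν`. In terms of the numbers of cycles of each length `p_1, p_2, …` are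
triangular, and one further long cycle frees the spare variable `p_0`, so these values determine
`f` even when only large `n` are considered. It therefore suffices to compare both sides under
`φ_n` for `n ≥ 2|μ|`.

There `h_μ = ∑ K_{νμ} s_ν` comes from iterating Pieri's rule, since the chains of horizontal strips
that arise are the Gelfand–Tsetlin patterns of column strict tableaux. Pieri's rule itself is read
off from a determinant of power series evaluated both by column and by row operations.
Multiplying `s_ν` by `h_{n-|μ|}` once more gives the `s_κ` with `κ/ν` a horizontal strip. Write
`κ = (n - |λ|, λ)`: then `ν/λ` is a horizontal strip, and conversely every such `λ` occurs, since
`n ≥ 2|μ|` makes the new first row long enough to cover that of `ν`.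
-/

section JacobiTrudi

open Finset PowerSeries

variable {R : Type*} [CommRing R]

theorem det_eq_of_forall_col_eq_smul_add_succ {k : ℕ} {A B : Matrix (Fin (k + 1)) (Fin (k + 1)) R}
    (c : Fin k → R) (hlast : ∀ i, A i (Fin.last k) = B i (Fin.last k))
    (hcast : ∀ i j, A i j.castSucc = B i j.castSucc + c j * A i j.succ) : A.det = B.det := by
  rw [← Matrix.det_submatrix_equiv_self Fin.revPerm A,
    ← Matrix.det_submatrix_equiv_self Fin.revPerm B]
  refine Matrix.det_eq_of_forall_col_eq_smul_add_pred (fun j => c j.rev) (fun i => ?_)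
    fun i j => ?_
  · simpa using hlast i.rev
  · simpa [Fin.rev_succ, Fin.rev_castSucc] using hcast i.rev j.rev

theorem det_of_last_row {k : ℕ} {M : Matrix (Fin (k + 1)) (Fin (k + 1)) R}
    (hM : ∀ j, M (Fin.last k) (Fin.castSucc j) = 0) :
    M.det = M (Fin.last k) (Fin.last k) * (M.submatrix Fin.castSucc Fin.castSucc).det := by
  simp [Matrix.det_succ_row M (Fin.last k), Fin.sum_univ_castSucc, hM, ← two_mul]

theorem coeff_det_mk {k : ℕ} (u : Fin k → Fin k → ℕ → R) (n : ℕ) :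
    coeff n (Matrix.of fun i j => mk (u i j)).det =
      ∑ κ ∈ finsuppAntidiag (range k) n, (Matrix.of fun i j => u i j (κ i)).det := by
  simp_rw [← Matrix.det_transpose (Matrix.of _), Matrix.det_apply, map_sum, Matrix.transpose_apply,
    Matrix.of_apply]
  rw [sum_comm]
  refine sum_congr rfl fun σ _ => ?_
  rw [Units.smul_def, map_zsmul, prod_fin_eq_prod_range, coeff_prod, smul_sum]
  refine sum_congr rfl fun κ _ => ?_
  rw [Units.smul_def, prod_fin_eq_prod_range]
  congr 1
  refine prod_congr rfl fun i hi => ?_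
  simp [mem_range.1 hi]

/-- The Jacobi–Trudi determinant `det (h (νᵢ - i + j))` on the first `k` row lengths of `ν`,
whose value is the Schur function `s_ν` when `ν` vanishes from `k` on. -/
def jtDet (h : ℤ → R) (k : ℕ) (ν : ℕ → ℕ) : R :=
  (Matrix.of fun i j : Fin k => h ((ν i : ℤ) - i + j)).det

variable {h : ℤ → R}

theorem jtDet_succ_of_eq_zero (h0 : h 0 = 1) (hneg : ∀ z < 0, h z = 0) {k : ℕ} {ν : ℕ → ℕ}
    (hν : ν k = 0) : jtDet h (k + 1) ν = jtDet h k ν := by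
  rw [jtDet, det_of_last_row]
  · simp [jtDet, hν, h0, Matrix.submatrix]
  · exact fun j => hneg _ (by simp [hν])

theorem jtDet_eq_of_le (h0 : h 0 = 1) (hneg : ∀ z < 0, h z = 0) {k l : ℕ} {ν : ℕ → ℕ}
    (hν : ∀ i, k ≤ i → ν i = 0) (hkl : k ≤ l) : jtDet h l ν = jtDet h k ν := by
  induction l, hkl using Nat.le_induction with
  | base => rfl
  | succ l hkl ih => rw [jtDet_succ_of_eq_zero h0 hneg (hν l hkl), ih]

/-- The skew shape with row lengths `κ` outside and `ν` inside is a horizontal strip: the row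
lengths interlace, `κ₀ ≥ ν₀ ≥ κ₁ ≥ ν₁ ≥ ⋯`, which is to say that no column has two cells. -/
def IsHorizontalStrip (κ ν : ℕ → ℕ) : Prop := ∀ i, ν i ≤ κ i ∧ κ (i + 1) ≤ ν i

theorem IsHorizontalStrip.antitone {κ ν : ℕ → ℕ} (hs : IsHorizontalStrip κ ν) : Antitone κ :=
  antitone_nat_of_succ_le fun i => (hs i).2.trans (hs i).1

/-- The power series `∑_{b ≥ a} h (b + s) t ^ b`, where `t` marks the cells of a row that is at
least `a` long. -/
def tailSeries (h : ℤ → R) (a : ℕ) (s : ℤ) : R⟦X⟧ := mk fun b => if a ≤ b then h (b + s) else 0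

theorem X_mul_tailSeries (a : ℕ) (s : ℤ) :
    X * tailSeries h a s = tailSeries h (a + 1) (s - 1) := by
  ext (_ | b)
  · simp [tailSeries]
  · simp [tailSeries, coeff_succ_X_mul, show (b : ℤ) + 1 + (s - 1) = b + s by ring]

theorem tailSeries_eq_add (a : ℕ) (s : ℤ) :
    tailSeries h a s = C (h (a + s)) * X ^ a + X * tailSeries h a (s + 1) := by
  rw [X_mul_tailSeries]
  ext b
  rcases lt_trichotomy a b with hab | rfl | hab
  · simp [tailSeries, coeff_X_pow, hab, hab.le, hab.ne']
  · simp [tailSeries, coeff_X_pow]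
  · simp [tailSeries, coeff_X_pow, hab.ne, hab.not_ge, hab.not_gt]

/-- The Jacobi–Trudi matrix summed over all ways of lengthening the rows of `ν`. Evaluating its
determinant by column and by row operations gives the two sides of Pieri's rule. -/
def tailMatrix (h : ℤ → R) (k : ℕ) (ν : ℕ → ℕ) : Matrix (Fin (k + 1)) (Fin (k + 1)) R⟦X⟧ :=
  Matrix.of fun i j => tailSeries h (ν i) ((j : ℤ) - i)

theorem det_tailMatrix (hneg : ∀ z < 0, h z = 0) {k : ℕ} {ν : ℕ → ℕ} (hν : ν k = 0) :
    (tailMatrix h k ν).det =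
      (mk fun r => h r) * (C (jtDet h k ν) * X ^ ∑ i ∈ range k, ν i) := by
  -- Subtracting `t` times its right neighbour from each column leaves one term per entry.
  let B : Matrix (Fin (k + 1)) (Fin (k + 1)) R⟦X⟧ := Matrix.of fun i =>
    Fin.lastCases (tailSeries h (ν i) (k - i)) fun j => X ^ ν i * C (h (ν i - i + j))
  have hB : (tailMatrix h k ν).det = B.det :=
    det_eq_of_forall_col_eq_smul_add_succ (fun _ => X)
      (fun i => by simp [B, tailMatrix]) fun i j => by
        simp only [tailMatrix, B, Matrix.of_apply, Fin.lastCases_castSucc, Fin.val_castSucc,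
          Fin.val_succ, Nat.cast_add, Nat.cast_one]
        rw [tailSeries_eq_add]
        ring_nf
  have hminor : (B.submatrix Fin.castSucc Fin.castSucc).det =
      C (jtDet h k ν) * X ^ ∑ i ∈ range k, ν i := by
    let M : Matrix (Fin k) (Fin k) R := Matrix.of fun i j => h (ν i - i + j)
    calc _ = (Matrix.of fun i j : Fin k => X ^ ν i * C.mapMatrix M i j).det := by
          congr 1; ext1 i j; simp [B, M]
      _ = C M.det * X ^ ∑ i ∈ range k, ν i := by
          rw [Matrix.det_mul_column, prod_pow_eq_pow_sum, ← Fin.sum_univ_eq_sum_range,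
            RingHom.map_det, mul_comm]
  rw [hB, det_of_last_row, hminor]
  · simp [B, hν, tailSeries]
  · exact fun j => by simp [B, hν, hneg]

theorem isHorizontalStrip_iff_forall_fin {κ ν : ℕ → ℕ} {k : ℕ} (hκ : ∀ i, k < i → κ i = 0)
    (hν : ∀ i, k ≤ i → ν i = 0) :
    IsHorizontalStrip κ ν ↔
      ∀ i : Fin (k + 1), ν i ≤ κ i ∧ ∀ j, (i : ℕ) = j + 1 → κ i ≤ ν j := by
  refine ⟨fun hs i => ⟨(hs i).1, fun j hj => hj ▸ (hs j).2⟩, fun hs i => ⟨?_, ?_⟩⟩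
  · rcases le_or_gt i k with hi | hi
    · exact (hs ⟨i, by omega⟩).1
    · simp [hν i hi.le]
  · rcases lt_or_ge i k with hi | hi
    · exact (hs ⟨i + 1, by omega⟩).2 i rfl
    · simp [hκ (i + 1) (by omega)]

open scoped Classical in
theorem det_tailMatrix_eq_det_mk {k : ℕ} {ν : ℕ → ℕ} (hν : Antitone ν) :
    (tailMatrix h k ν).det = (Matrix.of fun i j : Fin (k + 1) => mk fun b =>
      (if ν i ≤ b ∧ ∀ j, (i : ℕ) = j + 1 → b ≤ ν j then 1 else 0) * h ((b : ℤ) - i + j)).det := by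
  -- Subtracting `t` times the row above from each row truncates its entries to polynomials.
  refine Matrix.det_eq_of_forall_row_eq_smul_add_pred (fun _ => X) (fun j => ?_) fun i j => ?_
  · ext b; simp [tailMatrix, tailSeries, sub_eq_add_neg]
  · have hνi : ν (i + 1) ≤ ν i := hν (Nat.le_add_right _ 1)
    simp only [tailMatrix, Matrix.of_apply, X_mul_tailSeries]
    simp only [tailSeries]
    ext b
    have hj : (b : ℤ) + (j - i - 1) = b + (j - (i + 1)) := by ring
    have hi : (b : ℤ) - (i + 1) + j = b + (j - (i + 1)) := by ring
    simp only [map_add, coeff_mk, Fin.val_succ, Fin.val_castSucc, Nat.cast_add, Nat.cast_one,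
      Nat.succ_inj, forall_eq', hi, hj]
    split_ifs <;> first | omega | simp

open scoped Classical in
theorem coeff_det_tailMatrix {k : ℕ} {ν : ℕ → ℕ} (hν : Antitone ν) (hk : ν k = 0) (n : ℕ) :
    coeff n (tailMatrix h k ν).det = ∑ κ ∈ finsuppAntidiag (range (k + 1)) n,
      if IsHorizontalStrip κ ν then jtDet h (k + 1) κ else 0 := by
  rw [det_tailMatrix_eq_det_mk hν, coeff_det_mk]
  refine sum_congr rfl fun κ hκ => ?_
  have hκ0 (i : ℕ) (hi : k < i) : κ i = 0 := Finsupp.notMem_support_iff.1 fun h =>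
    absurd (mem_range.1 ((mem_finsuppAntidiag.1 hκ).2 h)) (by omega)
  have hν0 (i : ℕ) (hi : k ≤ i) : ν i = 0 := Nat.le_zero.1 (hk ▸ hν hi)
  calc _ = (∏ i : Fin (k + 1), if ν i ≤ κ i ∧ ∀ j, (i : ℕ) = j + 1 → κ i ≤ ν j then 1 else 0) *
        jtDet h (k + 1) κ := Matrix.det_mul_column _ _
    _ = _ := by simp [prod_ite_zero, isHorizontalStrip_iff_forall_fin hκ0 hν0]

open scoped Classical in
theorem mul_jtDet (hneg : ∀ z < 0, h z = 0) {k : ℕ} {ν : ℕ → ℕ} (hν : Antitone ν) (hk : ν k = 0)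
    (r : ℕ) : h r * jtDet h k ν =
      ∑ κ ∈ finsuppAntidiag (range (k + 1)) (r + ∑ i ∈ range k, ν i),
        if IsHorizontalStrip κ ν then jtDet h (k + 1) κ else 0 := by
  rw [← coeff_det_tailMatrix hν hk, det_tailMatrix hneg hk, ← mul_assoc, coeff_mul_X_pow,
    coeff_mul_C, coeff_mk]

end JacobiTrudi

section RowLengths

open Finset

variable {n : ℕ}

theorem coe_partList (lam : n.Partition) : (partList lam : Multiset ℕ) = lam.parts := by
  simp [partList]

theorem pairwise_partList (lam : n.Partition) : (partList lam).Pairwise (· ≥ ·) := by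
  simp [partList, List.pairwise_reverse]

theorem pos_of_mem_partList {lam : n.Partition} {a : ℕ} (ha : a ∈ partList lam) : 0 < a :=
  lam.parts_pos (by simpa [partList] using ha)

/-- The row lengths `λ₀ ≥ λ₁ ≥ ⋯` of a partition, indexed from `0` and continued by zeros. -/
def rowLen (lam : n.Partition) : ℕ →₀ ℕ := (partList lam).toFinsupp

theorem support_rowLen (lam : n.Partition) :
    (rowLen lam).support = range (partList lam).length := by
  ext i
  simp only [rowLen, List.toFinsupp_support, mem_filter, mem_range, and_iff_left_iff_imp]
  intro hi
  simp [hi, (pos_of_mem_partList (List.getElem_mem hi)).ne']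

theorem rowLen_eq_zero_iff {lam : n.Partition} {i : ℕ} :
    rowLen lam i = 0 ↔ (partList lam).length ≤ i := by
  rw [← Finsupp.notMem_support_iff, support_rowLen, mem_range, not_lt]

theorem antitone_rowLen (lam : n.Partition) : Antitone (rowLen lam) := by
  intro i j hij
  rcases lt_or_ge j (partList lam).length with hj | hj
  · simpa [rowLen, hj, hij.trans_lt hj] using
      (pairwise_partList lam).sortedGE.antitone_get (a := ⟨i, hij.trans_lt hj⟩) (b := ⟨j, hj⟩) hij
  · simp [rowLen_eq_zero_iff.2 hj]

theorem parts_eq_map_rowLen (lam : n.Partition) :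
    lam.parts = (rowLen lam).support.val.map (rowLen lam) := by
  rw [← coe_partList, support_rowLen, range_val, Multiset.range, Multiset.map_coe]
  congr 1
  exact List.ext_getElem (by simp) fun i hi _ => by simp [rowLen, hi]

theorem degree_rowLen (lam : n.Partition) : (rowLen lam).degree = n := by
  calc _ = ((rowLen lam).support.val.map (rowLen lam)).sum := rfl
    _ = n := by rw [← parts_eq_map_rowLen, lam.parts_sum]

theorem rowLen_sigma_injective :
    Function.Injective fun p : Σ n : ℕ, n.Partition => rowLen p.2 := by
  rintro ⟨n, lam⟩ ⟨n', lam'⟩ (h : rowLen lam = rowLen lam')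
  obtain rfl : n = n' := by rw [← degree_rowLen lam, h, degree_rowLen]
  congr 1
  exact Nat.Partition.ext (by rw [parts_eq_map_rowLen, h, ← parts_eq_map_rowLen])

theorem rowLen_injective : Function.Injective (rowLen : n.Partition → ℕ →₀ ℕ) := fun _ _ h =>
  sigma_mk_injective (rowLen_sigma_injective h)

theorem exists_support_eq_range {f : ℕ →₀ ℕ} (hf : Antitone f) : ∃ l, f.support = range l := by
  have hzero : ∃ l, f l = 0 :=
    (Infinite.exists_notMem_finset f.support).imp fun _ => Finsupp.notMem_support_iff.1
  refine ⟨Nat.find hzero, ext fun i => ?_⟩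
  rw [Finsupp.mem_support_iff, mem_range]
  refine ⟨fun hi => ?_, Nat.find_min hzero⟩
  by_contra! hle
  exact hi (Nat.le_zero.1 ((hf hle).trans_eq (Nat.find_spec hzero)))

theorem exists_rowLen_eq {f : ℕ →₀ ℕ} (hf : Antitone f) (hn : f.degree = n) :
    ∃ lam : n.Partition, rowLen lam = f := by
  obtain ⟨l, hl⟩ := exists_support_eq_range hf
  let lam : n.Partition := ⟨f.support.val.map f, by simp +contextual [Nat.pos_iff_ne_zero], hn⟩
  have hlam : partList lam = (List.range l).map f := by
    refine List.Perm.eq_of_pairwise' (r := (· ≥ ·)) (pairwise_partList lam) ?_ ?_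
    · exact List.pairwise_map.2 (List.pairwise_lt_range.imp fun h => hf h.le)
    · rw [← Multiset.coe_eq_coe, coe_partList]
      simp [lam, hl]
      rfl
  refine ⟨lam, Finsupp.ext fun i => ?_⟩
  rcases lt_or_ge i l with hi | hi
  · simp [rowLen, hlam, hi]
  · rw [rowLen_eq_zero_iff.2 (by simpa [hlam] using hi), eq_comm, ← Finsupp.notMem_support_iff, hl]
    simpa using hi

open scoped Classical in
theorem sum_finsuppAntidiag_antitone {M : Type*} [AddCommMonoid M] (l n : ℕ)
    (f : (ℕ →₀ ℕ) → M) :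
    ∑ κ ∈ (finsuppAntidiag (range l) n).filter fun κ : ℕ →₀ ℕ => Antitone κ, f κ =
      ∑ lam : n.Partition with (partList lam).length ≤ l, f (rowLen lam) := by
  refine (sum_bij (fun lam _ => rowLen lam) (fun lam hlam => ?_) (fun _ _ _ _ h =>
    rowLen_injective h) (fun κ hκ => ?_) fun _ _ => rfl).symm
  · rw [mem_filter, mem_finsuppAntidiag', support_rowLen, range_subset_range]
    exact ⟨⟨degree_rowLen lam, (mem_filter.1 hlam).2⟩, antitone_rowLen lam⟩
  · obtain ⟨⟨hsum, hsupp⟩, hanti⟩ := by simpa only [mem_filter, mem_finsuppAntidiag'] using hκ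
    obtain ⟨lam, rfl⟩ := exists_rowLen_eq hanti hsum
    exact ⟨lam, by simpa [support_rowLen] using hsupp, rfl⟩

end RowLengths

section Pieri

open Finset

theorem hInt_of_neg {z : ℤ} (hz : z < 0) : hInt z = 0 := if_neg hz.not_ge

theorem hInt_natCast (n : ℕ) : hInt n = hFn n := by simp [hInt]

theorem hInt_zero : hInt 0 = 1 := by
  simp [hInt, hFn, zed, pPart, pMul]

theorem schurList_eq_jtDet {L : List ℕ} {k : ℕ} (hk : L.length ≤ k) :
    schurList L = jtDet hInt k L.toFinsupp := by
  rw [jtDet_eq_of_le hInt_zero (fun _ => hInt_of_neg) (fun i hi => ?_) hk]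
  · simp [schurList, jtDet]
  · simp [hi]

theorem schur_eq_jtDet {n k : ℕ} {lam : n.Partition} (hk : (partList lam).length ≤ k) :
    schur lam = jtDet hInt k (rowLen lam) := schurList_eq_jtDet hk

open scoped Classical in
theorem hFn_mul_schur {r m n : ℕ} (hn : r + m = n) (nu : m.Partition) :
    hFn r * schur nu = ∑ kap : n.Partition,
      if IsHorizontalStrip (rowLen kap) (rowLen nu) then schur kap else 0 := by
  subst hn
  set k := (partList nu).length
  have hk : rowLen nu k = 0 := rowLen_eq_zero_iff.2 le_rfl
  have hsum : ∑ i ∈ range k, rowLen nu i = m := by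
    rw [← support_rowLen, ← Finsupp.degree_apply, degree_rowLen]
  have hlen {kap : (r + m).Partition} (hs : IsHorizontalStrip (rowLen kap) (rowLen nu)) :
      (partList kap).length ≤ k + 1 :=
    rowLen_eq_zero_iff.1 (Nat.le_zero.1 ((hs k).2.trans_eq hk))
  rw [schur_eq_jtDet le_rfl, ← hInt_natCast,
    mul_jtDet (fun _ => hInt_of_neg) (antitone_rowLen nu) hk, hsum,
    ← sum_filter_of_ne (p := fun κ : ℕ →₀ ℕ => Antitone κ), sum_finsuppAntidiag_antitone,
    sum_filter]
  · refine sum_congr rfl fun kap _ => ?_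
    by_cases hs : IsHorizontalStrip (rowLen kap) (rowLen nu)
    · simp [hs, hlen hs, schur_eq_jtDet (hlen hs)]
    · simp [hs]
  · exact fun κ _ hne => IsHorizontalStrip.antitone (by_contra fun hs => hne (if_neg hs))

end Pieri

section Kostka

open Finset

/-- Gelfand–Tsetlin patterns of weight `c` and top row `ν`: chains of partitions
`0 = G 0 ⊆ G 1 ⊆ ⋯ ⊆ G l = ν` in which `G (x + 1) / G x` is a horizontal strip of `c x` cells.
The chain is continued by `ν` after step `l`. -/
structure IsGTPattern (c : ℕ → ℕ) (l : ℕ) (ν : ℕ →₀ ℕ) (G : ℕ → ℕ →₀ ℕ) : Prop where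
  zero : G 0 = 0
  strip : ∀ x, IsHorizontalStrip (G (x + 1)) (G x)
  shape : ∀ x, l ≤ x → G x = ν
  weight : ∀ x ≤ l, (G x).degree = ∑ y ∈ range x, c y

variable {c : ℕ → ℕ} {l : ℕ} {ν κ : ℕ →₀ ℕ} {G : ℕ → ℕ →₀ ℕ}

theorem IsHorizontalStrip.refl {ν : ℕ → ℕ} (hν : Antitone ν) : IsHorizontalStrip ν ν :=
  fun i => ⟨le_rfl, hν (Nat.le_add_right i 1)⟩

namespace IsGTPattern

theorem antitone (hG : IsGTPattern c l ν G) : ∀ x, Antitone (G x)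
  | 0 => hG.zero ▸ antitone_const
  | x + 1 => (hG.strip x).antitone

theorem extend (hG : IsGTPattern c l ν G) (hs : IsHorizontalStrip κ ν)
    (hκ : κ.degree = ∑ y ∈ range (l + 1), c y) :
    IsGTPattern c (l + 1) κ fun x => if x ≤ l then G x else κ where
  zero := by simp [hG.zero]
  strip x := by
    rcases lt_trichotomy x l with hx | rfl | hx
    · simpa [hx.le, hx] using hG.strip x
    · simpa [hG.shape x le_rfl] using hs
    · simpa [hx.not_ge, show ¬x + 1 ≤ l by omega] using IsHorizontalStrip.refl hs.antitone
  shape x hx := if_neg (by omega)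
  weight x hx := by
    rcases hx.lt_or_eq with hx | rfl
    · simpa [Nat.lt_succ_iff.1 hx] using hG.weight x (by omega)
    · simpa using hκ

theorem truncate (hG : IsGTPattern c (l + 1) κ G) :
    IsGTPattern c l (G l) fun x => G (min x l) where
  zero := by simp [hG.zero]
  strip x := by
    rcases lt_or_ge x l with hx | hx
    · simpa [hx.le, Nat.succ_le_of_lt hx] using hG.strip x
    · simpa [hx, hx.trans (Nat.le_add_right x 1)] using IsHorizontalStrip.refl (hG.antitone l)
  shape x hx := by simp [hx]
  weight x hx := by simpa [hx] using hG.weight x (by omega)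

theorem ext {G' : ℕ → ℕ →₀ ℕ} (hG : IsGTPattern c l ν G) (hG' : IsGTPattern c l κ G')
    (h : ∀ x ≤ l, G x = G' x) : G = G' := by
  funext x
  rcases le_total x l with hx | hx
  · exact h x hx
  · rw [hG.shape x hx, hG'.shape x hx, ← hG.shape l le_rfl, ← hG'.shape l le_rfl, h l le_rfl]

theorem bijective_extend {n : ℕ} (hn : ∑ y ∈ range l, c y = n)
    (hκ : κ.degree = ∑ y ∈ range (l + 1), c y) :
    Function.Bijective (fun p => ⟨_, p.2.2.2.extend p.2.2.1 hκ⟩ :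
      (Σ ν : n.Partition, {G // IsHorizontalStrip κ (rowLen ν) ∧ IsGTPattern c l (rowLen ν) G}) →
        {G // IsGTPattern c (l + 1) κ G}) := by
  refine ⟨fun ⟨ν, G, hs, hG⟩ ⟨ν', G', hs', hG'⟩ h => ?_, fun ⟨G, hG⟩ => ?_⟩
  · obtain rfl : G = G' := hG.ext hG' fun x hx => by
      simpa [hx] using congrFun (congrArg Subtype.val h) x
    obtain rfl : ν = ν' :=
      rowLen_injective (by rw [← hG.shape l le_rfl, hG'.shape l le_rfl])
    rfl
  · obtain ⟨ν, hν⟩ := exists_rowLen_eq (hG.antitone l) ((hG.weight l (by omega)).trans hn)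
    refine ⟨⟨ν, fun x => G (min x l), ?_, hν ▸ hG.truncate⟩, Subtype.ext (funext fun x => ?_)⟩
    · simpa [hν, hG.shape (l + 1) le_rfl] using hG.strip l
    · rcases le_or_gt x l with hx | hx
      · simp [hx]
      · simp [hx.not_ge, hG.shape x hx]

end IsGTPattern

theorem isGTPattern_zero_iff : IsGTPattern c 0 ν G ↔ ν = 0 ∧ G = 0 := by
  refine ⟨fun hG => ?_, ?_⟩
  · have hν : ν = 0 := by rw [← hG.shape 0 le_rfl, hG.zero]
    exact ⟨hν, funext fun x => (hG.shape x (Nat.zero_le x)).trans hν⟩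
  · rintro ⟨rfl, rfl⟩
    exact ⟨rfl, fun _ _ => by simp, fun _ _ => rfl, by simp⟩

theorem finite_setOf_isGTPattern : {G | IsGTPattern c l ν G}.Finite := by
  induction l generalizing ν with
  | zero => exact (Set.finite_singleton 0).subset fun G hG => (isGTPattern_zero_iff.1 hG).2
  | succ l ih =>
    by_cases hν : ν.degree = ∑ y ∈ range (l + 1), c y
    · have (μ : (∑ y ∈ range l, c y).Partition) :
          Finite {G // IsHorizontalStrip ν (rowLen μ) ∧ IsGTPattern c l (rowLen μ) G} :=
        (ih.subset fun _ hG => hG.2).to_subtype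
      exact Set.finite_coe_iff.1 (Finite.of_surjective _ (IsGTPattern.bijective_extend rfl hν).2)
    · exact Set.finite_empty.subset fun G hG => hν (hG.shape _ le_rfl ▸ hG.weight _ le_rfl)

/-- The number of Gelfand–Tsetlin patterns of weight `c` and top row `ν`. -/
noncomputable def gtCount (c : ℕ → ℕ) (l : ℕ) (ν : ℕ →₀ ℕ) : ℕ :=
  Nat.card {G // IsGTPattern c l ν G}

theorem gtCount_zero : gtCount c 0 0 = 1 := by
  simp [gtCount, isGTPattern_zero_iff]

open scoped Classical in
theorem gtCount_succ {n : ℕ} (hn : ∑ y ∈ range l, c y = n)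
    (hκ : κ.degree = ∑ y ∈ range (l + 1), c y) :
    gtCount c (l + 1) κ = ∑ ν : n.Partition,
      if IsHorizontalStrip κ (rowLen ν) then gtCount c l (rowLen ν) else 0 := by
  have (ν : n.Partition) :
      Finite {G // IsHorizontalStrip κ (rowLen ν) ∧ IsGTPattern c l (rowLen ν) G} :=
    (finite_setOf_isGTPattern.subset fun _ hG => hG.2).to_subtype
  rw [gtCount, ← Nat.card_congr (Equiv.ofBijective _ (IsGTPattern.bijective_extend hn hκ)),
    Nat.card_sigma]
  refine sum_congr rfl fun ν _ => ?_
  split_ifs with hs <;> simp [gtCount, hs]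

theorem prod_hFn_eq_sum_gtCount_smul_schur {m : ℕ} (hm : ∑ y ∈ range l, c y = m) :
    ∏ y ∈ range l, hFn (c y) = ∑ nu : m.Partition, (gtCount c l (rowLen nu) : ℚ) • schur nu := by
  classical
  induction l generalizing m with
  | zero =>
    obtain rfl : m = 0 := by simpa using hm.symm
    have hrow (nu : Nat.Partition 0) : rowLen nu = 0 :=
      (Finsupp.degree_eq_zero_iff _).1 (degree_rowLen nu)
    have hlen (nu : Nat.Partition 0) : (partList nu).length ≤ 0 :=
      rowLen_eq_zero_iff.1 (by rw [hrow, Finsupp.zero_apply])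
    simp [hrow, gtCount_zero, schur_eq_jtDet (hlen _), jtDet]
  | succ l ih =>
    have hm' : c l + ∑ y ∈ range l, c y = m := by rw [← hm, sum_range_succ, add_comm]
    rw [prod_range_succ, ih rfl, sum_mul]
    calc _ = ∑ nu : (∑ y ∈ range l, c y).Partition, ∑ kap : m.Partition,
          if IsHorizontalStrip (rowLen kap) (rowLen nu) then
            (gtCount c l (rowLen nu) : ℚ) • schur kap else 0 :=
          sum_congr rfl fun nu _ => by
            simp_rw [smul_mul_assoc, mul_comm (schur nu), hFn_mul_schur hm', smul_sum, smul_ite,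
              smul_zero]
      _ = _ := by
          rw [sum_comm]
          refine sum_congr rfl fun kap _ => ?_
          rw [gtCount_succ rfl (by rw [degree_rowLen, hm]), Nat.cast_sum, sum_smul]
          exact sum_congr rfl fun nu _ => by split_ifs <;> simp

end Kostka

section Lists

open Finset

theorem degree_toFinsupp (L : List ℕ) : L.toFinsupp.degree = L.sum := by
  calc _ = ∑ i ∈ range L.length, L.toFinsupp i :=
        sum_subset (by simp [List.toFinsupp_support]) fun i _ => Finsupp.notMem_support_iff.1
    _ = L.sum := by
        rw [← Fin.sum_univ_eq_sum_range L.toFinsupp, ← Fin.sum_univ_getElem]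
        simp

theorem getD_le_iff_lt_countP {L : List ℕ} (hL : L.Pairwise (· ≤ ·)) {j : ℕ} (hj : j < L.length)
    (x : ℕ) : L.getD j 0 ≤ x ↔ j < L.countP (· ≤ x) := by
  have hmono {a b : ℕ} (hab : a ≤ b) (hb : b < L.length) : L[a] ≤ L[b] :=
    hL.sortedLE.monotone_get (a := ⟨a, hab.trans_lt hb⟩) (b := ⟨b, hb⟩) hab
  rw [List.getD_eq_getElem _ _ hj]
  constructor
  · intro hx
    have htake : (L.take (j + 1)).countP (· ≤ x) = j + 1 := by
      rw [List.countP_eq_length.2, List.length_take_of_le hj]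
      intro y hy
      obtain ⟨i, hi, rfl⟩ := List.mem_take_iff_getElem.1 hy
      simpa using (hmono (by omega) hj).trans hx
    exact htake.symm.le.trans (List.take_sublist _ _).countP_le
  · contrapose!
    intro hx
    have hdrop : (L.drop j).countP (· ≤ x) = 0 := by
      rw [List.countP_eq_zero]
      intro y hy
      obtain ⟨i, hi, rfl⟩ := List.mem_drop_iff_getElem.1 hy
      simpa [add_comm] using hx.trans_le (hmono (Nat.le_add_right j i) (by omega))
    rw [← List.take_append_drop j L, List.countP_append, hdrop, add_zero]
    exact List.countP_le_length.trans (List.length_take_le _ _)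

theorem eq_of_countP_le_eq {L L' : List ℕ} (hL : L.Pairwise (· ≤ ·))
    (hL' : L'.Pairwise (· ≤ ·)) (hlen : L.length = L'.length)
    (h : ∀ x, L.countP (· ≤ x) = L'.countP (· ≤ x)) : L = L' := by
  refine List.ext_getElem hlen fun j hj hj' => eq_of_forall_ge_iff fun x => ?_
  rw [← List.getD_eq_getElem _ 0 hj, ← List.getD_eq_getElem _ 0 hj', getD_le_iff_lt_countP hL hj,
    getD_le_iff_lt_countP hL' hj', h]

theorem countP_le_succ (L : List ℕ) (x : ℕ) :
    L.countP (· ≤ x + 1) = L.countP (· ≤ x) + L.count (x + 1) := by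
  induction L with
  | nil => rfl
  | cons a L ih =>
    simp only [List.countP_cons, List.count_cons, ih, decide_eq_true_eq, beq_iff_eq]
    split_ifs <;> omega

theorem countP_le_eq_sum_count {L : List ℕ} (hL : ∀ y ∈ L, 0 < y) (x : ℕ) :
    L.countP (· ≤ x) = ∑ y ∈ range x, L.count (y + 1) := by
  induction x with
  | zero => simpa [Nat.pos_iff_ne_zero] using hL
  | succ x ih => rw [sum_range_succ, ← ih, countP_le_succ]

end Lists

namespace SkewTab

open Finset

variable {T T' : SkewTab} {m : ℕ} {nu : m.Partition} {c : ℕ → ℕ} {l : ℕ}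

/-- Row `i` of a tableau, empty beyond the last row. -/
def row (T : SkewTab) (i : ℕ) : List ℕ := T.rows.getD i []

theorem forall_mem_rows_iff {P : List ℕ → Prop} (hnil : P []) :
    (∀ r ∈ T.rows, P r) ↔ ∀ i, P (T.row i) := by
  refine ⟨fun h i => ?_, fun h => List.forall_mem_iff_getElem.2 fun i hi => ?_⟩
  · rcases lt_or_ge i T.rows.length with hi | hi
    · simpa [row, hi] using h _ (List.getElem_mem hi)
    · simpa [row, hi] using hnil
  · simpa [row, hi] using h i

theorem length_row (hs : T.shape = partList nu) (i : ℕ) : (T.row i).length = rowLen nu i := by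
  rw [rowLen, ← hs, List.toFinsupp_apply]
  exact (List.getD_map T.rows [] List.length).symm

theorem isCST_iff (hs : T.shape = partList nu) :
    T.IsCST ↔ T.inn = List.replicate T.rows.length 0 ∧ (∀ i, (T.row i).Pairwise (· ≤ ·)) ∧
      (∀ i, ∀ x ∈ T.row i, 0 < x) ∧
      ∀ i j, j < rowLen nu (i + 1) → (T.row i).getD j 0 < (T.row (i + 1)).getD j 0 := by
  unfold IsCST
  rw [and_comm, and_congr_right_iff]
  intro hinn
  have hinnFn (i : ℕ) : T.innFn i = 0 := by
    rw [innFn, hinn]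
    rcases lt_or_ge i T.rows.length with hi | hi <;> simp [hi]
  have houtFn (i : ℕ) : T.outFn i = rowLen nu i := by
    rw [outFn, hinnFn, zero_add]
    exact length_row hs i
  have hlen : T.rows.length = (partList nu).length := by rw [← hs, shape, List.length_map]
  have htop : T.rows ≠ [] → rowLen nu (T.rows.length - 1) ≠ 0 := fun hne => by
    have := List.length_pos_iff.2 hne
    rw [ne_eq, rowLen_eq_zero_iff]
    omega
  have hanti (i : ℕ) : rowLen nu (i + 1) ≤ rowLen nu i := antitone_rowLen nu (Nat.le_succ i)
  simp only [IsSkewCST, hinnFn, houtFn, hanti, entry, hinn, List.length_replicate, Nat.zero_le,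
    le_rfl, implies_true, true_and, true_imp_iff, Nat.sub_zero]
  refine (and_iff_right htop).trans (and_congr ?_ (and_congr (forall_mem_rows_iff (by simp)) .rfl))
  exact (forall₂_congr fun r _ => List.isChain_iff_pairwise).trans
    (forall_mem_rows_iff List.Pairwise.nil)

/-- The Gelfand–Tsetlin pattern of a tableau: row `i` has `T.pattern x i` entries at most `x`. -/
def pattern (T : SkewTab) (x : ℕ) : ℕ →₀ ℕ :=
  (T.rows.map fun r => r.countP (· ≤ x)).toFinsupp

theorem pattern_apply (x i : ℕ) : T.pattern x i = (T.row i).countP (· ≤ x) :=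
  List.getD_map T.rows [] _

theorem degree_pattern (hT : ∀ i, ∀ y ∈ T.row i, 0 < y) (x : ℕ) :
    (T.pattern x).degree = ∑ y ∈ range x, T.contentCount (y + 1) := by
  have hpos : ∀ y ∈ T.rows.flatten, 0 < y :=
    List.forall_mem_flatten.2 ((forall_mem_rows_iff (by simp)).2 hT)
  rw [pattern, degree_toFinsupp, ← List.countP_flatten, countP_le_eq_sum_count hpos]
  rfl

theorem isHorizontalStrip_pattern (hT : T.IsCST) (hs : T.shape = partList nu) (x : ℕ) :
    IsHorizontalStrip (T.pattern (x + 1)) (T.pattern x) := by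
  obtain ⟨-, hrow, -, hcol⟩ := (isCST_iff hs).1 hT
  refine fun i => ⟨?_, le_of_forall_lt fun j hj => ?_⟩
  · simp only [pattern_apply]
    exact List.countP_mono_left fun y _ hy => by simp_all; omega
  · rw [pattern_apply] at hj ⊢
    have hj₁ := hj.trans_le List.countP_le_length
    have hj₀ : j < (T.row i).length := by
      rw [length_row hs] at hj₁ ⊢
      exact hj₁.trans_le (antitone_rowLen nu (Nat.le_succ i))
    rw [← getD_le_iff_lt_countP (hrow _) hj₀]
    rw [← getD_le_iff_lt_countP (hrow _) hj₁] at hj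
    exact Nat.lt_succ_iff.1 ((hcol i j (length_row hs _ ▸ hj₁)).trans_le hj)

theorem isGTPattern_pattern (hT : T.IsCST) (hs : T.shape = partList nu)
    (hc : ∀ i, l ≤ i → c i = 0) (hcont : ∀ i, T.contentCount (i + 1) = c i) :
    IsGTPattern c l (rowLen nu) T.pattern where
  zero := by
    obtain ⟨-, -, hpos, -⟩ := (isCST_iff hs).1 hT
    ext i
    simpa [pattern_apply, Nat.pos_iff_ne_zero] using hpos i
  strip := isHorizontalStrip_pattern hT hs
  shape x hx := by
    have hentry : ∀ i, ∀ y ∈ T.row i, y ≤ x := by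
      refine (forall_mem_rows_iff (by simp)).1 (List.forall_mem_flatten.1 fun y hy => ?_)
      by_contra! hxy
      have hcount := hcont (y - 1)
      rw [hc _ (by omega), Nat.sub_add_cancel (by omega)] at hcount
      exact List.count_eq_zero.1 hcount hy
    ext i
    rw [← length_row hs, pattern_apply, List.countP_eq_length]
    simpa using hentry i
  weight x _ := by
    rw [degree_pattern ((isCST_iff hs).1 hT).2.2.1]
    exact sum_congr rfl fun y _ => hcont y

theorem eq_of_pattern_eq (hT : T.IsCST) (hT' : T'.IsCST) (hs : T.shape = partList nu)
    (hs' : T'.shape = partList nu) (h : T.pattern = T'.pattern) : T = T' := by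
  obtain ⟨hinn, hrow, -, -⟩ := (isCST_iff hs).1 hT
  obtain ⟨hinn', hrow', -, -⟩ := (isCST_iff hs').1 hT'
  have hlen : T.rows.length = T'.rows.length := by
    simpa [shape] using congrArg List.length (hs.trans hs'.symm)
  have hrows : T.rows = T'.rows := by
    refine List.ext_getElem hlen fun i hi hi' => ?_
    have : T.row i = T'.row i := by
      refine eq_of_countP_le_eq (hrow i) (hrow' i) ?_ fun x => ?_
      · rw [length_row hs, length_row hs']
      · rw [← pattern_apply, h, pattern_apply]
    simpa [row, hi, hi'] using this
  cases T
  cases T'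
  simp_all

/-- The tableau of shape `ν` with Gelfand–Tsetlin pattern `G`: the entry in row `i`, column `j` is
the least `x` with `j < G x i`. -/
noncomputable def ofPattern (nu : m.Partition) (G : ℕ → ℕ →₀ ℕ) : SkewTab where
  inn := List.replicate (partList nu).length 0
  rows := (List.range (partList nu).length).map fun i =>
    (List.range (rowLen nu i)).map fun j => sInf {x | j < G x i}

theorem row_ofPattern (nu : m.Partition) (G : ℕ → ℕ →₀ ℕ) (i : ℕ) :
    (ofPattern nu G).row i = (List.range (rowLen nu i)).map fun j => sInf {x | j < G x i} := by
  rcases lt_or_ge i (partList nu).length with hi | hi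
  · simp [row, ofPattern, hi]
  · simp [row, ofPattern, hi, rowLen_eq_zero_iff.2 hi]

theorem shape_ofPattern (nu : m.Partition) (G : ℕ → ℕ →₀ ℕ) :
    (ofPattern nu G).shape = partList nu :=
  List.ext_getElem (by simp [shape, ofPattern]) fun i _ hi => by
    simp [shape, ofPattern, rowLen, hi]

end SkewTab

namespace IsGTPattern

open Finset

variable {m : ℕ} {nu : m.Partition} {c : ℕ → ℕ} {l : ℕ} {ν : ℕ →₀ ℕ} {G : ℕ → ℕ →₀ ℕ}

theorem apply_mono (hG : IsGTPattern c l ν G) (i : ℕ) : Monotone fun x => G x i :=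
  monotone_nat_of_le_succ fun x => (hG.strip x i).1

theorem degree_eq (hG : IsGTPattern c l ν G) (hc : ∀ i, l ≤ i → c i = 0) (x : ℕ) :
    (G x).degree = ∑ y ∈ range x, c y := by
  rcases le_total x l with hx | hx
  · exact hG.weight x hx
  · rw [hG.shape x hx, ← hG.shape l le_rfl, hG.weight l le_rfl, eventually_constant_sum hc hx]

theorem sInf_le_iff (hG : IsGTPattern c l ν G) {i j : ℕ} (hj : j < ν i) (x : ℕ) :
    sInf {x | j < G x i} ≤ x ↔ j < G x i := by
  refine ⟨fun hx => ?_, fun hx => Nat.sInf_le hx⟩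
  have hne : {x | j < G x i}.Nonempty := ⟨l, by simpa [hG.shape l le_rfl] using hj⟩
  exact (Nat.sInf_mem hne).trans_le (hG.apply_mono i hx)

theorem sInf_lt_sInf_succ (hG : IsGTPattern c l ν G) {i j : ℕ} (hj : j < ν (i + 1)) :
    sInf {x | j < G x i} < sInf {x | j < G x (i + 1)} := by
  have hj₀ : j < ν i := by
    rw [← hG.shape l le_rfl] at hj ⊢
    exact hj.trans_le (hG.antitone l (Nat.le_succ i))
  have hlt : j < G (sInf {x | j < G x (i + 1)}) (i + 1) := (hG.sInf_le_iff hj _).1 le_rfl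
  generalize sInf {x | j < G x (i + 1)} = x at hlt
  cases x with
  | zero => simp [hG.zero] at hlt
  | succ x => exact Nat.lt_succ_iff.2 ((hG.sInf_le_iff hj₀ x).2 (hlt.trans_le (hG.strip x i).2))

theorem isCST_ofPattern (hG : IsGTPattern c l (rowLen nu) G) :
    (SkewTab.ofPattern nu G).IsCST := by
  refine (SkewTab.isCST_iff (SkewTab.shape_ofPattern nu G)).2 ⟨by simp [SkewTab.ofPattern], ?_⟩
  simp only [SkewTab.row_ofPattern]
  refine ⟨fun i => ?_, fun i => ?_, fun i j hj => ?_⟩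
  · rw [List.pairwise_map]
    refine List.pairwise_lt_range.imp_of_mem fun {j j'} hj hj' hlt => ?_
    rw [hG.sInf_le_iff (List.mem_range.1 hj)]
    exact hlt.trans ((hG.sInf_le_iff (List.mem_range.1 hj') _).1 le_rfl)
  · simp only [List.forall_mem_map, List.mem_range]
    intro j hj
    by_contra! h
    simp [hG.sInf_le_iff hj, hG.zero] at h
  · have hj₀ : j < rowLen nu i := hj.trans_le (antitone_rowLen nu (Nat.le_succ i))
    simpa [hj, hj₀] using hG.sInf_lt_sInf_succ hj

theorem pattern_ofPattern (hG : IsGTPattern c l (rowLen nu) G) :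
    (SkewTab.ofPattern nu G).pattern = G := by
  obtain ⟨-, hrow, -, -⟩ := (SkewTab.isCST_iff (SkewTab.shape_ofPattern nu G)).1 hG.isCST_ofPattern
  ext x i
  have hlen := SkewTab.length_row (SkewTab.shape_ofPattern nu G) i
  have hle : G x i ≤ rowLen nu i := by
    rw [← hG.shape (max x l) (le_max_right _ _)]
    exact hG.apply_mono i (le_max_left _ _)
  rw [SkewTab.pattern_apply]
  refine eq_of_forall_lt_iff fun j => ?_
  rcases lt_or_ge j (rowLen nu i) with hj | hj
  · rw [← getD_le_iff_lt_countP (hrow i) (hlen ▸ hj), ← hG.sInf_le_iff hj, SkewTab.row_ofPattern]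
    simp [hj]
  · exact iff_of_false (List.countP_le_length.trans (hlen.le.trans hj)).not_gt (hle.trans hj).not_gt

theorem contentCount_ofPattern (hG : IsGTPattern c l (rowLen nu) G) (hc : ∀ i, l ≤ i → c i = 0)
    (x : ℕ) : (SkewTab.ofPattern nu G).contentCount (x + 1) = c x := by
  obtain ⟨-, -, hpos, -⟩ :=
    (SkewTab.isCST_iff (SkewTab.shape_ofPattern nu G)).1 hG.isCST_ofPattern
  have hdegree (x : ℕ) := SkewTab.degree_pattern hpos x
  simp only [hG.pattern_ofPattern, hG.degree_eq hc] at hdegree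
  have := hdegree (x + 1)
  rwa [sum_range_succ, sum_range_succ, hdegree x, add_right_inj, eq_comm] at this

end IsGTPattern

section KostkaNumbers

open Finset

variable {m : ℕ}

/-- The Kostka number `K_{νμ}`: the number of column strict tableaux of shape `ν` and
content `μ`. -/
noncomputable def kostka (nu mu : m.Partition) : ℕ :=
  Nat.card {T : SkewTab // T.IsCST ∧ T.shape = partList nu ∧
    ∀ i, T.contentCount (i + 1) = (partList mu).getD i 0}

theorem kostka_eq_gtCount (nu mu : m.Partition) :
    kostka nu mu = gtCount (rowLen mu) (partList mu).length (rowLen nu) := by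
  have hc (i : ℕ) : (partList mu).length ≤ i → rowLen mu i = 0 := rowLen_eq_zero_iff.2
  refine Nat.card_eq_of_bijective
    (fun T => ⟨T.1.pattern, SkewTab.isGTPattern_pattern T.2.1 T.2.2.1 hc T.2.2.2⟩)
    ⟨fun T T' h => ?_, fun G => ?_⟩
  · exact Subtype.ext (SkewTab.eq_of_pattern_eq T.2.1 T'.2.1 T.2.2.1 T'.2.2.1
      (congrArg Subtype.val h))
  · exact ⟨⟨SkewTab.ofPattern nu G.1, G.2.isCST_ofPattern, SkewTab.shape_ofPattern nu G.1,
      G.2.contentCount_ofPattern hc⟩, Subtype.ext G.2.pattern_ofPattern⟩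

theorem prod_map_hFn_eq_sum_kostka_smul_schur (mu : m.Partition) :
    (mu.parts.map hFn).prod = ∑ nu : m.Partition, (kostka nu mu : ℚ) • schur nu := by
  have hdegree : ∑ y ∈ range (partList mu).length, rowLen mu y = m := by
    rw [← support_rowLen, ← Finsupp.degree_apply, degree_rowLen]
  simp_rw [kostka_eq_gtCount]
  rw [← prod_hFn_eq_sum_gtCount_smul_schur hdegree, parts_eq_map_rowLen, support_rowLen,
    Multiset.map_map]
  rfl

end KostkaNumbers

section CharacterMap

open Finset MvPolynomial

theorem pMul_eq_monomial (s : Multiset ℕ) : pMul s = monomial (Multiset.toFinsupp s) 1 := by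
  induction s using Multiset.induction_on with
  | empty => simp [pMul]
  | cons a s ih =>
    have hcons : pMul (a ::ₘ s) = X a * pMul s := by simp [pMul, pGen]
    rw [hcons, ih, X, monomial_mul, mul_one, ← Multiset.singleton_add, map_add,
      Multiset.toFinsupp_singleton]

theorem zed_ne_zero {n : ℕ} (nu : n.Partition) : zed nu ≠ 0 := by
  refine prod_ne_zero_iff.2 fun i _ => mul_ne_zero ?_ (by positivity)
  rcases i.eq_zero_or_pos with rfl | hi
  · simp [Multiset.count_eq_zero_of_notMem fun h => (nu.parts_pos h).ne rfl]
  · positivity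

theorem coeff_phi {n : ℕ} (nu : n.Partition) (f : SymFn) :
    coeff (Multiset.toFinsupp nu.parts) (phi n f) = xiEval nu f / zed nu := by
  classical
  simp [phi, pPart, pMul_eq_monomial, coeff_sum, coeff_monomial, ← Nat.Partition.ext_iff]

theorem phi_eq_phi_iff {n : ℕ} {f g : SymFn} :
    phi n f = phi n g ↔ ∀ nu : n.Partition, xiEval nu f = xiEval nu g := by
  refine ⟨fun h nu => ?_, fun h => by simp only [phi, h]⟩
  rw [← div_left_inj' (zed_ne_zero nu), ← coeff_phi, h, coeff_phi]

theorem isLinearMap_phi (n : ℕ) : IsLinearMap ℚ (phi n) where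
  map_add f g := by simp [phi, xiEval, add_div, add_smul, sum_add_distrib]
  map_smul a f := by simp [phi, xiEval, smul_eval, mul_div_assoc, mul_smul, smul_sum]

theorem sum_filter_sum_replicate (S : Finset ℕ) (c : ℕ → ℕ) (p : ℕ → Prop) [DecidablePred p] :
    ((∑ j ∈ S, Multiset.replicate (c j) j).filter p).sum = ∑ j ∈ S with p j, j * c j := by
  induction S using Finset.induction_on with
  | empty => simp
  | insert a S ha ih =>
    rw [sum_insert ha, Multiset.filter_add, Multiset.sum_add, ih, filter_insert]
    split_ifs with hp
    · rw [sum_insert (by simp [ha]), Multiset.filter_eq_self.2 fun b hb =>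
        Multiset.eq_of_mem_replicate hb ▸ hp]
      simp [mul_comm]
    · rw [Multiset.filter_eq_nil.2 fun b hb => Multiset.eq_of_mem_replicate hb ▸ hp]
      simp

/-- The power sum `p_k`, `k ≤ N`, at the eigenvalues of a permutation matrix with `X j` cycles of
length `j` for `1 ≤ j ≤ N` and one further cycle whose length `X 0` exceeds `N`. The long cycle
contributes to `p_0` only, which makes `p_0` independent of the other power sums. -/
noncomputable def cyclePowerSum (N k : ℕ) : MvPolynomial ℕ ℚ :=
  (if k = 0 then X 0 else 0) + ∑ j ∈ Icc 1 N with j ∣ k, (j : MvPolynomial ℕ ℚ) * X j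

theorem eval_bind₁ {σ τ R : Type*} [CommSemiring R] (θ : σ → MvPolynomial τ R) (v : τ → R)
    (f : MvPolynomial σ R) : eval v (bind₁ θ f) = eval (fun k => eval v (θ k)) f :=
  eval₂Hom_bind₁ _ _ _ _

theorem exists_xiEval_eq (N : ℕ) (v : ℕ → ℕ) (hv : N < v 0) :
    ∃ (n : ℕ) (nu : n.Partition), v 0 ≤ n ∧ ∀ f : SymFn, (∀ k ∈ f.vars, k ≤ N) →
      xiEval nu f = eval (fun j => (v j : ℚ)) (bind₁ (cyclePowerSum N) f) := by
  let t : Multiset ℕ := ∑ j ∈ Icc 1 N, Multiset.replicate (v j) j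
  have hpos {i : ℕ} (hi : i ∈ v 0 ::ₘ t) : 0 < i := by
    rcases Multiset.mem_cons.1 hi with rfl | hi
    · omega
    · obtain ⟨j, hj, hi⟩ := Multiset.mem_sum.1 hi
      rw [Multiset.eq_of_mem_replicate hi]
      exact (mem_Icc.1 hj).1
  refine ⟨_, ⟨v 0 ::ₘ t, hpos, rfl⟩, by simp, fun f hf => ?_⟩
  rw [eval_bind₁]
  refine eval₂Hom_congr' rfl (fun k hk _ => ?_) rfl
  have hlong : v 0 ∣ k ↔ k = 0 :=
    ⟨fun h => Nat.eq_zero_of_dvd_of_lt h ((hf k hk).trans_lt hv), fun h => by simp [h]⟩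
  have hsum : ((v 0 ::ₘ t).filter (· ∣ k)).sum =
      (if k = 0 then v 0 else 0) + ∑ j ∈ Icc 1 N with j ∣ k, j * v j := by
    rw [Multiset.filter_cons, Multiset.sum_add, sum_filter_sum_replicate]
    by_cases hk0 : k = 0 <;> simp [hlong, hk0]
  simp only [cyclePowerSum, hsum, map_add, map_sum, map_mul, map_natCast, eval_X,
    apply_ite (eval _), map_zero]
  push_cast
  rfl

theorem exists_eval_cyclePowerSum_eq (N : ℕ) (y : ℕ → ℚ) :
    ∃ v : ℕ → ℚ, ∀ k ≤ N, eval v (cyclePowerSum N k) = y k := by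
  obtain ⟨w, hw⟩ : ∃ w : ℕ → ℚ, ∀ k > 0, ∑ j ∈ k.divisors, w j = y k :=
    ⟨_, ArithmeticFunction.sum_eq_iff_sum_mul_moebius_eq.2 fun _ _ => rfl⟩
  let v : ℕ → ℚ := fun j => if j = 0 then y 0 - ∑ i ∈ Icc 1 N, w i else w j / j
  have hv {j : ℕ} (hj : j ∈ Icc 1 N) : (j : ℚ) * v j = w j := by
    have hj0 : j ≠ 0 := Nat.one_le_iff_ne_zero.1 (mem_Icc.1 hj).1
    simp only [v, if_neg hj0]
    field_simp
  refine ⟨v, fun k hk => ?_⟩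
  have heval : eval v (cyclePowerSum N k) =
      (if k = 0 then v 0 else 0) + ∑ j ∈ Icc 1 N with j ∣ k, w j := by
    simp only [cyclePowerSum, map_add, apply_ite (eval v), map_sum, map_mul, map_natCast, eval_X,
      map_zero]
    rw [sum_congr rfl fun j hj => hv (mem_filter.1 hj).1]
  rcases k.eq_zero_or_pos with rfl | hk0
  · simp [heval, v]
  · have hdivisors : {j ∈ Icc 1 N | j ∣ k} = k.divisors := by
      ext j
      simp only [mem_filter, mem_Icc, Nat.mem_divisors]
      exact ⟨fun h => ⟨h.2, hk0.ne'⟩, fun h => ⟨⟨Nat.pos_of_dvd_of_pos h.1 hk0,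
        (Nat.le_of_dvd hk0 h.1).trans hk⟩, h.1⟩⟩
    rw [heval, if_neg hk0.ne', zero_add, hdivisors, hw k hk0]

theorem eq_zero_of_bind₁_cyclePowerSum_eq_zero {N : ℕ} {f : SymFn} (hf : ∀ k ∈ f.vars, k ≤ N)
    (h : bind₁ (cyclePowerSum N) f = 0) : f = 0 := by
  refine MvPolynomial.funext fun y => ?_
  obtain ⟨v, hv⟩ := exists_eval_cyclePowerSum_eq N y
  calc eval y f = eval (fun k => eval v (cyclePowerSum N k)) f :=
        eval₂Hom_congr' rfl (fun k hk _ => (hv k (hf k hk)).symm) rfl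
    _ = eval y 0 := by rw [← eval_bind₁, h, map_zero, map_zero]

theorem eq_of_eventually_phi_eq {f g : SymFn} (h : ∀ᶠ n in Filter.atTop, phi n f = phi n g) :
    f = g := by
  obtain ⟨n₀, hn₀⟩ := Filter.eventually_atTop.1 h
  let N := (f.vars ∪ g.vars).sup id
  have hvars : ∀ k ∈ (f - g).vars, k ≤ N := fun k hk => le_sup (f := id) (vars_sub_subset _ hk)
  refine sub_eq_zero.1 (eq_zero_of_bind₁_cyclePowerSum_eq_zero hvars ?_)
  refine funext_set (fun _ => Nat.cast '' Set.Ici (max (N + 1) n₀))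
    (fun _ => (Set.Ici_infinite _).image Nat.cast_injective.injOn) fun x hx => ?_
  choose v hv hvx using fun i => hx i trivial
  obtain rfl : (fun i => (v i : ℚ)) = x := _root_.funext hvx
  obtain ⟨hN, hn⟩ := max_le_iff.1 (Set.mem_Ici.1 (hv 0))
  obtain ⟨n, nu, hvn, hnu⟩ := exists_xiEval_eq N v hN
  rw [← hnu _ hvars, map_zero, xiEval, map_sub]
  exact sub_eq_zero.2 (phi_eq_phi_iff.1 (hn₀ n (hn.trans hvn)) nu)

end CharacterMap

section FirstRow

open Finset

variable {k m n : ℕ}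

theorem schurList_eq_schur {L : List ℕ} {lam : n.Partition} (h : rowLen lam = L.toFinsupp) :
    schurList L = schur lam := by
  rw [schurList_eq_jtDet (le_max_left L.length (partList lam).length),
    schur_eq_jtDet (le_max_right L.length _), h]

theorem toFinsupp_cons_succ (a : ℕ) (lam : k.Partition) (i : ℕ) :
    (a :: partList lam).toFinsupp (i + 1) = rowLen lam i := by
  simp [rowLen]

theorem degree_toFinsupp_cons (a : ℕ) (lam : k.Partition) :
    (a :: partList lam).toFinsupp.degree = a + k := by
  rw [degree_toFinsupp, List.sum_cons, ← degree_toFinsupp]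
  exact congrArg (a + ·) (degree_rowLen lam)

theorem exists_rowLen_eq_toFinsupp_cons (kap : n.Partition) :
    ∃ k, ∃ lam : k.Partition, rowLen kap = ((n - k) :: partList lam).toFinsupp := by
  set f := (partList kap).tail.toFinsupp with hf
  have hsucc (i : ℕ) : f i = rowLen kap (i + 1) := by cases h : partList kap <;> simp [f, rowLen, h]
  have hdegree : rowLen kap 0 + f.degree = n := by
    calc _ = (partList kap).sum := by
          rw [hf, degree_toFinsupp, rowLen]
          cases partList kap <;> simp
      _ = n := (degree_toFinsupp _).symm.trans (degree_rowLen kap)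
  obtain ⟨lam, hlam⟩ := exists_rowLen_eq (f := f) (fun i j hij => by
    simpa only [hsucc] using antitone_rowLen kap (Nat.succ_le_succ hij)) rfl
  refine ⟨f.degree, lam, Finsupp.ext fun i => ?_⟩
  cases i with
  | zero => simp [← hdegree]
  | succ i => rw [toFinsupp_cons_succ, hlam, hsucc]

namespace IsHorizontalStrip

theorem of_toFinsupp_cons {nu : m.Partition} {lam : k.Partition} {a : ℕ}
    (hs : IsHorizontalStrip (a :: partList lam).toFinsupp (rowLen nu)) :
    IsHorizontalStrip (rowLen nu) (rowLen lam) := fun i => by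
  rw [← toFinsupp_cons_succ a]
  exact ⟨(hs i).2, (hs (i + 1)).1⟩

theorem toFinsupp_cons {nu : m.Partition} {lam : k.Partition} {a : ℕ} (ha : m ≤ a)
    (hs : IsHorizontalStrip (rowLen nu) (rowLen lam)) :
    IsHorizontalStrip (a :: partList lam).toFinsupp (rowLen nu)
  | 0 => ⟨(Finsupp.le_degree 0 (rowLen nu)).trans ((degree_rowLen nu).trans_le ha), by
      simpa only [toFinsupp_cons_succ] using (hs 0).1⟩
  | i + 1 => by simpa only [toFinsupp_cons_succ] using ⟨(hs i).2, (hs (i + 1)).1⟩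

theorem size_le {nu : m.Partition} {lam : k.Partition}
    (hs : IsHorizontalStrip (rowLen nu) (rowLen lam)) : k ≤ m := by
  rw [← degree_rowLen lam, ← degree_rowLen nu]
  exact Finsupp.degree_mono fun i => (hs i).1

end IsHorizontalStrip

open scoped Classical in
theorem hFn_sub_mul_schur (hn : 2 * m ≤ n) (nu : m.Partition) :
    hFn (n - m) * schur nu = ∑ k ∈ range (m + 1), ∑ lam : k.Partition,
      if IsHorizontalStrip (rowLen nu) (rowLen lam) then schurList ((n - k) :: partList lam)
      else 0 := by
  choose k lam hlam using exists_rowLen_eq_toFinsupp_cons (n := n)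
  have hstrip {kap : n.Partition} (hs : IsHorizontalStrip (rowLen kap) (rowLen nu)) :
      IsHorizontalStrip (rowLen nu) (rowLen (lam kap)) := .of_toFinsupp_cons (hlam kap ▸ hs)
  rw [hFn_mul_schur (Nat.sub_add_cancel (show m ≤ n by omega)), sum_sigma', ← sum_filter,
    ← sum_filter]
  refine sum_bij (fun kap _ => ⟨k kap, lam kap⟩) (fun kap hkap => ?_) (fun kap _ kap' _ h => ?_)
    (fun ⟨k', lam'⟩ hlam' => ?_) fun kap _ => (schurList_eq_schur (hlam kap)).symm
  · have hs := hstrip (mem_filter.1 hkap).2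
    exact mem_filter.2 ⟨mem_sigma.2 ⟨mem_range_succ_iff.2 hs.size_le, mem_univ _⟩, hs⟩
  · refine rowLen_injective ?_
    rw [hlam, hlam]
    injection h with hk hlam
    congr
  · have hs := (mem_filter.1 hlam').2
    have hle : k' ≤ m := hs.size_le
    have hcons := hs.toFinsupp_cons (a := n - k') (by omega)
    obtain ⟨kap, hkap⟩ := exists_rowLen_eq (n := n) hcons.antitone (by
      rw [degree_toFinsupp_cons, Nat.sub_add_cancel (by omega)])
    refine ⟨kap, by simpa [hkap] using hcons, rowLen_sigma_injective (Finsupp.ext fun i => ?_)⟩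
    rw [← toFinsupp_cons_succ, ← hlam, hkap, toFinsupp_cons_succ]

end FirstRow

open scoped Classical in
/-- for a partition `μ` of `m`, the element `ĥ_μ` (characterized by
`φ_n(ĥ_μ) = h_{(n−|μ|,μ)}` for `n ≥ 2m`) expands in the irreducible character basis
`s̃_λ` (characterized by `φ_n(s̃_λ) = s_{(n−|λ|,λ)}`) as
`ĥ_μ = ∑_{ν ⊢ m} ∑_{λ : ν/λ horizontal strip} K_{νμ} s̃_λ`, where `K_{νμ}` is the
Kostka number. -/
theorem ht_expansion_in_st (m : ℕ) (mu : Nat.Partition m)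
    (ht : SymFn) (st : ∀ k : ℕ, Nat.Partition k → SymFn)
    (hht : ∀ n, 2 * m ≤ n → phi n ht = hFn (n - m) * (mu.parts.map hFn).prod)
    (hst : ∀ (k : ℕ) (lam : Nat.Partition k) (n : ℕ), 2 * k ≤ n →
        phi n (st k lam) = schurList ((n - k) :: partList lam)) :
    ht = ∑ nu : Nat.Partition m, ∑ k ∈ Finset.range (m + 1),
        ∑ lam : Nat.Partition k,
          if (∀ i, (partList lam).getD i 0 ≤ (partList nu).getD i 0 ∧
                (partList nu).getD (i + 1) 0 ≤ (partList lam).getD i 0)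
          then ((Nat.card {T : SkewTab // T.IsCST ∧ T.shape = partList nu ∧
                  ∀ i, T.contentCount (i + 1) = (partList mu).getD i 0} : ℚ))
                • st k lam
          else 0 := by
  refine eq_of_eventually_phi_eq (Filter.eventually_atTop.2 ⟨2 * m, fun n hn => ?_⟩)
  have hphi (k : ℕ) (hk : k ∈ Finset.range (m + 1)) (lam : k.Partition) :
      phi n (st k lam) = schurList ((n - k) :: partList lam) :=
    hst k lam n (by have := Finset.mem_range.1 hk; omega)
  let φ := (isLinearMap_phi n).mk' _
  calc phi n ht = hFn (n - m) * ∑ nu : m.Partition, (kostka nu mu : ℚ) • schur nu := by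
        rw [hht n hn, prod_map_hFn_eq_sum_kostka_smul_schur]
    _ = ∑ nu : m.Partition, ∑ k ∈ Finset.range (m + 1), ∑ lam : k.Partition,
          if IsHorizontalStrip (rowLen nu) (rowLen lam) then
            (kostka nu mu : ℚ) • schurList ((n - k) :: partList lam) else 0 := by
        simp_rw [Finset.mul_sum, mul_smul_comm, hFn_sub_mul_schur hn, Finset.smul_sum, smul_ite,
          smul_zero]
    _ = φ (∑ nu : m.Partition, ∑ k ∈ Finset.range (m + 1), ∑ lam : k.Partition,
          if IsHorizontalStrip (rowLen nu) (rowLen lam) then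
            (kostka nu mu : ℚ) • st k lam else 0) := by
        simp_rw [map_sum, apply_ite φ, map_smul, map_zero]
        refine Finset.sum_congr rfl fun nu _ => Finset.sum_congr rfl fun k hk =>
          Finset.sum_congr rfl fun lam _ => ?_
        rw [← hphi k hk lam]
        rfl
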